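/- Let [a_1,…,a_r] be a T-chain with Hirzebruch–Jung value n/q, and suppose that for some s with 1 ≤ s < r one has a_1 = ⋯ = a_s = 2 and a_{s+1} > 2. Then β(n/q) + s ≤ r, and consequently a_{s+1} + ⋯ + a_r = 3r + 2 − β(n/q) − 2s ≥ r + β(n/q) + 2 ≥ 5. -/

import Mathlib

/-- Hirzebruch–Jung continued fraction: `hj [b] = b`, `hj (b :: l) = b - 1 / hj l`. -/
def hj : List ℚ → ℚ
  | [] => 0
  | b :: l => b - 1 / hj l

/-- `g = gcd(n, q+1)`. -/
def Tg (n q : ℕ) : ℕ := Nat.gcd n (q + 1)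

/-- `β(n/q) = gcd(n, q+1)² / n ∈ ℚ`. -/
def Tbeta (n q : ℕ) : ℚ := (Tg n q : ℚ) ^ 2 / (n : ℚ)

/-- `n/q` (with `n > q ≥ 1` coprime) is a T-fraction if `n ∣ (q+1)²` and `q ≠ n-1`. -/
def IsTFraction (n q : ℕ) : Prop :=
  1 ≤ q ∧ q < n ∧ Nat.Coprime n q ∧ n ∣ (q + 1) ^ 2 ∧ q ≠ n - 1

/-- Action of the continuant matrices of a list on a pair of integers. -/
def hjAct : List ℤ → ℤ → ℤ → ℤ × ℤ
  | [], u, v => (u, v)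
  | b :: l, u, v => (b * (hjAct l u v).1 - (hjAct l u v).2, (hjAct l u v).1)

lemma hjAct_snoc (l : List ℤ) (x u v : ℤ) :
    hjAct (l ++ [x]) u v = hjAct l (x * u - v) u := by
  induction l with
  | nil => simp [hjAct]
  | cons b l ih => simp [hjAct, ih]

lemma hjAct_replicate (k : ℕ) (u v : ℤ) :
    hjAct (List.replicate k 2) u v = ((k + 1) * u - k * v, k * u - (k - 1) * v) := by
  induction k with
  | zero => simp [hjAct]
  | succ k ih =>
    simp only [List.replicate_succ, hjAct, ih]
    push_cast
    ext <;> simp <;> ring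

lemma hjAct_bounds (l : List ℤ) (h : ∀ a ∈ l, 2 ≤ a) :
    0 ≤ (hjAct l 1 0).2 ∧ (hjAct l 1 0).2 < (hjAct l 1 0).1 ∧
      hj (l.map (fun a : ℤ => (a : ℚ))) = ((hjAct l 1 0).1 : ℚ) / ((hjAct l 1 0).2 : ℚ) := by
  induction l with
  | nil => simp [hjAct, hj]
  | cons b l ih =>
    obtain ⟨h0, h1, h2⟩ := ih (fun a ha => h a (List.mem_cons_of_mem _ ha))
    have hb : 2 ≤ b := h b List.mem_cons_self
    simp only [hjAct, List.map_cons, hj, h2]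
    refine ⟨by linarith, by nlinarith, ?_⟩
    have : ((hjAct l 1 0).1 : ℚ) ≠ 0 := by
      have : (hjAct l 1 0).1 ≠ 0 := by omega
      exact_mod_cast this
    push_cast
    rw [one_div_div]
    field_simp

lemma hj_inv_bounds (l : List ℤ) (h : ∀ a ∈ l, 2 ≤ a) :
    0 ≤ 1 / hj (l.map (fun a : ℤ => (a : ℚ))) ∧ 1 / hj (l.map (fun a : ℤ => (a : ℚ))) < 1 := by
  obtain ⟨h0, h1, h2⟩ := hjAct_bounds l h
  have h0' : (0 : ℚ) ≤ ((hjAct l 1 0).2 : ℚ) := by exact_mod_cast h0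
  have h1' : ((hjAct l 1 0).2 : ℚ) < ((hjAct l 1 0).1 : ℚ) := by exact_mod_cast h1
  rw [h2, one_div_div]
  exact ⟨div_nonneg h0' (by linarith), (div_lt_one (by linarith)).2 h1'⟩

lemma hj_cons_pos (b : ℤ) (l : List ℤ) (h : ∀ a ∈ b :: l, 2 ≤ a) :
    0 < hj ((b :: l).map (fun a : ℤ => (a : ℚ))) := by
  have hb : 2 ≤ b := h b List.mem_cons_self
  have hb' : (2 : ℚ) ≤ b := by exact_mod_cast hb
  have := (hj_inv_bounds l (fun a ha => h a (List.mem_cons_of_mem _ ha))).2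
  simp only [List.map_cons, hj]
  linarith

lemma hj_inj (l l' : List ℤ) (h : ∀ a ∈ l, 2 ≤ a) (h' : ∀ a ∈ l', 2 ≤ a)
    (he : hj (l.map (fun a : ℤ => (a : ℚ))) = hj (l'.map (fun a : ℤ => (a : ℚ)))) : l = l' := by
  induction l generalizing l' with
  | nil =>
    cases l' with
    | nil => rfl
    | cons b l' =>
      have := hj_cons_pos b l' h'
      rw [← he] at this
      simp [hj] at this
  | cons b l ih =>
    cases l' with
    | nil =>
      have := hj_cons_pos b l h
      rw [he] at this
      simp [hj] at this
    | cons b' l' =>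
      have hl : ∀ a ∈ l, 2 ≤ a := fun a ha => h a (List.mem_cons_of_mem _ ha)
      have hl' : ∀ a ∈ l', 2 ≤ a := fun a ha => h' a (List.mem_cons_of_mem _ ha)
      obtain ⟨p0, p1⟩ := hj_inv_bounds l hl
      obtain ⟨p0', p1'⟩ := hj_inv_bounds l' hl'
      simp only [List.map_cons, hj] at he
      have hb : b = b' := by
        have e1 : (b : ℚ) < b' + 1 := by linarith
        have e2 : (b' : ℚ) < b + 1 := by linarith
        have e1' : b < b' + 1 := by exact_mod_cast e1
        have e2' : b' < b + 1 := by exact_mod_cast e2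
        omega
      subst hb
      have e : 1 / hj (l.map (fun a : ℤ => (a : ℚ))) = 1 / hj (l'.map (fun a : ℤ => (a : ℚ))) := by
        linarith
      rw [one_div, one_div, inv_inj] at e
      rw [ih l' hl hl' e]

/-- The properties of the chain with parameters `β, m, a`. -/
def GoodChain (β m a : ℕ) (L : List ℤ) : Prop :=
  L ≠ [] ∧ (∀ x ∈ L, 2 ≤ x) ∧ L.sum = 3 * (L.length : ℤ) + 2 - β ∧
  (∀ s ≤ L.length, L.take s = List.replicate s 2 → β + s ≤ L.length) ∧
  ∀ u v : ℤ, hjAct L u v =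
    ((β : ℤ) * m ^ 2 * u - (β * m * (m - a) - 1) * v,
      (β * m * a - 1 : ℤ) * u - (β * a * (m - a) - 1) * v)

lemma good_base (β : ℕ) (hβ : 0 < β) : ∃ L, GoodChain β 2 1 L := by
  obtain rfl | ⟨k, rfl⟩ : β = 1 ∨ ∃ k, β = k + 2 := by
    rcases β with _ | _ | k
    · omega
    · simp
    · exact Or.inr ⟨k, rfl⟩
  · refine ⟨[4], by simp, by simp, by simp, ?_, ?_⟩
    · intro s hs h
      rcases s with _ | s
      · simp
      · simp [List.replicate_succ] at h
    · intro u v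
      simp [hjAct]
  · refine ⟨3 :: (List.replicate k 2 ++ [3]), by simp, ?_, ?_, ?_, ?_⟩
    · intro x hx
      simp only [List.mem_cons, List.mem_append, List.mem_replicate, List.not_mem_nil,
        or_false] at hx
      omega
    · simp
      ring
    · intro s hs h
      rcases s with _ | s
      · simp
      · simp [List.replicate_succ] at h
    · intro u v
      simp only [hjAct, hjAct_snoc, hjAct_replicate]
      push_cast
      ext <;> simp <;> ring

lemma good_left (β m a : ℕ) (h1 : m < 2 * a) (h2 : a < m) (L : List ℤ)
    (hL : GoodChain β a (2 * a - m) L) : ∃ L', GoodChain β m a L' := by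
  obtain ⟨hne, hge, hsum, hpre, hact⟩ := hL
  obtain ⟨M, x, rfl⟩ : ∃ M x, L = M ++ [x] :=
    ⟨L.dropLast, L.getLast hne, (List.dropLast_append_getLast hne).symm⟩
  have hx : 2 ≤ x := hge x (by simp)
  refine ⟨2 :: (M ++ [x + 1]), by simp, ?_, ?_, ?_, ?_⟩
  · intro y hy
    simp only [List.mem_cons, List.mem_append, List.not_mem_nil, or_false] at hy
    rcases hy with rfl | hy | rfl
    · norm_num
    · exact hge y (by simp [hy])
    · omega
  · simp at hsum ⊢
    linarith
  · intro s hs h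
    rcases s with _ | s
    · have := hpre 0 (by simp) (by simp)
      simp at this ⊢
      omega
    · simp only [List.take_succ_cons, List.replicate_succ, List.cons.injEq, true_and] at h
      simp only [List.length_cons, List.length_append, List.length_nil] at hs
      by_cases hsM : s ≤ M.length
      · rw [List.take_append_of_le_length hsM] at h
        have := hpre s (by simp; omega) (by rw [List.take_append_of_le_length hsM]; exact h)
        simp at this ⊢
        omega
      · rw [List.take_of_length_le (by simp; omega)] at h
        have : x + 1 ∈ List.replicate s (2 : ℤ) := by rw [← h]; simp
        have := List.eq_of_mem_replicate this
        omega
  · intro u v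
    have key : hjAct (M ++ [x + 1]) u v = hjAct (M ++ [x]) u (v - u) := by
      rw [hjAct_snoc, hjAct_snoc]
      congr 1
      ring
    simp only [hjAct, key, hact]
    push_cast [Nat.cast_sub h1.le]
    ext <;> simp <;> ring

lemma good_right (β m a : ℕ) (h2 : a < m) (L : List ℤ)
    (hL : GoodChain β (m - a) a L) : ∃ L', GoodChain β m a L' := by
  obtain ⟨hne, hge, hsum, hpre, hact⟩ := hL
  obtain ⟨x, M, rfl⟩ := List.exists_cons_of_ne_nil hne
  have hx : 2 ≤ x := hge x (by simp)
  refine ⟨(x + 1) :: (M ++ [2]), by simp, ?_, ?_, ?_, ?_⟩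
  · intro y hy
    simp only [List.mem_cons, List.mem_append, List.not_mem_nil, or_false] at hy
    rcases hy with rfl | hy | rfl
    · omega
    · exact hge y (by simp [hy])
    · norm_num
  · simp at hsum ⊢
    linarith
  · intro s hs h
    rcases s with _ | s
    · have := hpre 0 (by simp) (by simp)
      simp at this ⊢
      omega
    · simp only [List.take_succ_cons, List.replicate_succ, List.cons.injEq] at h
      omega
  · intro u v
    have key := hact (2 * u - v) u
    simp only [hjAct, Prod.mk.injEq] at key
    obtain ⟨k1, k2⟩ := key
    push_cast [Nat.cast_sub h2.le] at k1 k2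
    simp only [hjAct, hjAct_snoc, Prod.mk.injEq]
    constructor
    · linear_combination k1 + k2
    · linear_combination k2

lemma good_exists (β : ℕ) (hβ : 0 < β) (m : ℕ) : ∀ a, 0 < a → a < m → Nat.Coprime m a →
    ∃ L, GoodChain β m a L := by
  induction m using Nat.strong_induction_on with
  | _ m ih =>
    intro a ha ham hc
    by_cases hm : m = 2
    · subst hm
      obtain rfl : a = 1 := by omega
      exact good_base β hβ
    · rcases lt_trichotomy m (2 * a) with h | h | h
      · obtain ⟨L, hL⟩ := ih a ham (2 * a - m) (by omega) (by omega) (by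
          have h' : 2 * a - m = a - (m - a) := by omega
          have h3 : Nat.Coprime a (m - a) := by
            rw [Nat.coprime_sub_self_right ham.le]; exact hc.symm
          rw [h', Nat.coprime_self_sub_right (by omega)]
          exact h3)
        exact good_left β m a h ham L hL
      · exfalso
        subst h
        have : a = 1 := Nat.Coprime.eq_one_of_dvd hc.symm (Dvd.intro_left 2 rfl)
        omega
      · obtain ⟨L, hL⟩ := ih (m - a) (by omega) a ha (by omega) (by
          rw [Nat.coprime_sub_self_left ham.le]; exact hc)
        exact good_right β m a ham L hL

lemma tfraction_params (n q : ℕ) (hT : IsTFraction n q) :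
    ∃ β m a : ℕ, 0 < β ∧ 0 < a ∧ a < m ∧ Nat.Coprime m a ∧ n = β * m ^ 2 ∧
      q + 1 = β * m * a ∧ Tg n q = β * m := by
  obtain ⟨hq, hqn, -, hdvd, hne⟩ := hT
  obtain ⟨g, m, a, hg, hc, hn, hqa⟩ : ∃ g m a : ℕ, 0 < g ∧ Nat.Coprime m a ∧ n = m * g ∧
      q + 1 = a * g ∧ g = Nat.gcd n (q + 1) := by
    have hpos : 0 < Nat.gcd n (q + 1) := Nat.gcd_pos_of_pos_left _ (by omega)
    exact ⟨_, n / Nat.gcd n (q + 1), (q + 1) / Nat.gcd n (q + 1), hpos,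
      Nat.coprime_div_gcd_div_gcd hpos, (Nat.div_mul_cancel (Nat.gcd_dvd_left _ _)).symm,
      (Nat.div_mul_cancel (Nat.gcd_dvd_right _ _)).symm, rfl⟩
  obtain ⟨hqa, hgg⟩ := hqa
  have hmg : m ∣ g := by
    rw [hn, hqa] at hdvd
    have : m * g ∣ (a ^ 2 * g) * g := by convert hdvd using 1; ring
    have := Nat.dvd_of_mul_dvd_mul_right hg this
    exact (Nat.Coprime.pow_right 2 hc).dvd_of_dvd_mul_left this
  obtain ⟨β, rfl⟩ := hmg
  have hle : a ≤ m := by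
    by_contra hcon
    have : m * (m * β) < a * (m * β) := Nat.mul_lt_mul_of_pos_right (by omega) hg
    omega
  refine ⟨β, m, a, Nat.pos_of_mul_pos_left hg, ?_, ?_, hc, ?_, ?_, ?_⟩
  · rcases Nat.eq_zero_or_pos a with rfl | h
    · simp at hqa
    · exact h
  · rcases hle.lt_or_eq with h | rfl
    · exact h
    · omega
  · rw [hn]; ring
  · rw [hqa]; ring
  · rw [Tg, ← hgg]; ring


/-- Let `[a_1,…,a_r]` be a T-chain with Hirzebruch–Jung value `n/q`, and suppose
`a_1 = ⋯ = a_s = 2` and `a_{s+1} > 2` for some `1 ≤ s < r`. Then `β(n/q) + s ≤ r`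
and `a_{s+1} + ⋯ + a_r = 3r + 2 − β(n/q) − 2s ≥ r + β(n/q) + 2 ≥ 5`. -/
theorem tchain_tail_sum (L : List ℤ) (n q s : ℕ) (hL2 : ∀ a ∈ L, 2 ≤ a)
    (hT : IsTFraction n q)
    (hval : hj (L.map (fun a => (a : ℚ))) = (n : ℚ) / (q : ℚ))
    (hs1 : 1 ≤ s) (hsr : s < L.length)
    (htwos : L.take s = List.replicate s 2) (hnext : 2 < L.getD s 0) :
    ∃ β : ℕ, 0 < β ∧ (β : ℚ) = Tbeta n q ∧
      β + s ≤ L.length ∧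
      (L.drop s).sum = 3 * (L.length : ℤ) + 2 - (β : ℤ) - 2 * (s : ℤ) ∧
      (L.length : ℤ) + (β : ℤ) + 2 ≤ (L.drop s).sum ∧
      5 ≤ (L.drop s).sum := by
  obtain ⟨β, m, a, hβ, ha, ham, hc, hn, hq, hg⟩ := tfraction_params n q hT
  obtain ⟨L', hL'⟩ := good_exists β hβ m a ha ham hc
  obtain ⟨hne, hge, hsum, hpre, hact⟩ := hL'
  have hact1 := hact 1 0
  have hval' : hj (L.map (fun a : ℤ => (a : ℚ))) = (n : ℚ) / (q : ℚ) := by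
    rw [← hval]
    congr 1
    clear hval htwos hnext hsr hL2
    induction L with
    | nil => rfl
    | cons x l ih => simp_all
  have hLL : L = L' := by
    apply hj_inj L L' hL2 hge
    rw [hval', (hjAct_bounds L' hge).2.2, hact1]
    have hq' : ((q : ℚ)) = β * m * a - 1 := by
      have : ((q + 1 : ℕ) : ℚ) = ((β * m * a : ℕ) : ℚ) := by rw [hq]
      push_cast at this
      linarith
    rw [hn, hq']
    push_cast
    simp
  subst hLL
  have hb := hpre s hsr.le htwos
  have hsplit : (L.take s).sum + (L.drop s).sum = L.sum := by
    rw [← List.sum_append, List.take_append_drop]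
  have htake : (L.take s).sum = 2 * (s : ℤ) := by
    rw [htwos]; simp; ring
  refine ⟨β, hβ, ?_, hb, by omega, by omega, by omega⟩
  have hβ' : (β : ℚ) ≠ 0 := by exact_mod_cast hβ.ne'
  have hm' : (m : ℚ) ≠ 0 := by exact_mod_cast (by omega : m ≠ 0)
  rw [Tbeta, hg, hn]
  push_cast
  field_simp
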